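/- Let B = UUᵀ ∈ ℝ^{n×n} and R ∈ ℝ^{m×m} be the diffusion-modelled circulant covariance matrices B = (σ_b²ν_b L_b/h_b)(I_n − L_b²Δ_{h_b})^{−M_b} and R = (σ_o²ν_o L_o/h_o)(I_m − L_o²Δ_{h_o})^{−M_o}, and let H be the uniform selection operator with n = ζm, h_o = ζh_b. If S = I_n + Uᵀ Hᵀ R^{−1} H U, then λ_i(S) = 1 + α Σ_{r=0}^{ζ−1} [1 + 4L̃_o² sin²(πi/m)]^{M_o} / [1 + 4L̃_b² sin²(π(i+rm)/(ζm))]^{M_b} for i in {0,...,m−1}, and λ_i(S) = 1 otherwise, where α = σ_b²ν_b L_b/(σ_o²ν_o L_o), L̃_o = L_o/h_o, L̃_b = L_b/h_b. -/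

import Mathlib

open Matrix Polynomial

/-- The (unnormalised-frequency) `i`-th Fourier eigenvector of size-`m` circulant
matrices: `f^(i)_p = (1/√m) exp(-2πI i p / m)`. -/
noncomputable def fourierVec (m : ℕ) [NeZero m] (i : ZMod m) : ZMod m → ℂ :=
  fun p => (1 / (Real.sqrt m : ℂ)) *
    Complex.exp (-(2 * Real.pi * Complex.I * (i.val : ℂ) * (p.val : ℂ)) / m)

/-- The `i`-th Fourier eigenvalue of a (circulant) matrix `A`, i.e. the `i`-th DFT
coefficient of its first column: `λ_i(A) = Σ_k A k 0 · exp(2πI i k / m)`. -/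
noncomputable def fourierEig {m : ℕ} [NeZero m] (A : Matrix (ZMod m) (ZMod m) ℂ)
    (i : ZMod m) : ℂ :=
  ∑ k : ZMod m, A k 0 * Complex.exp (2 * Real.pi * Complex.I * (i.val : ℂ) * (k.val : ℂ) / m)

/-- A matrix indexed by `ZMod m` is circulant iff it is invariant under simultaneous
cyclic shifts of rows and columns. -/
def IsCirculant {m : ℕ} {α : Type*} (A : Matrix (ZMod m) (ZMod m) α) : Prop :=
  ∀ i j d : ZMod m, A (i + d) (j + d) = A i j

/-- The uniform selection operator `H : ℝ^{m×n}` picking every `ζ`-th component: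
`(Hx)_p = x_{ζ p}`. -/
noncomputable def selectionOp (ζ m n : ℕ) [NeZero m] [NeZero n] :
    Matrix (ZMod m) (ZMod n) ℝ :=
  Matrix.of fun p q => if q.val = ζ * p.val then 1 else 0

/-- The periodic second-difference (Laplacian) matrix with grid spacing `h`,
stencil `(1, -2, 1)/h²` with periodic boundary conditions. -/
noncomputable def lap (m : ℕ) [NeZero m] (h : ℝ) : Matrix (ZMod m) (ZMod m) ℝ :=
  Matrix.of fun i j =>
    ((if i = j then (-2 : ℝ) else 0) + (if i = j + 1 then 1 else 0) +
      (if j = i + 1 then 1 else 0)) / h ^ 2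

/-- The diffusion-modelled covariance matrix
`(σ² ν L / h) (I - L² Δ_h)^{-M}` on an `m`-point periodic grid. -/
noncomputable def diffCov (m : ℕ) [NeZero m] (σ ν L h : ℝ) (M : ℕ) :
    Matrix (ZMod m) (ZMod m) ℝ :=
  (σ ^ 2 * ν * L / h) • ((1 - (L ^ 2) • lap m h) ^ M)⁻¹

/-- The spectral condition number `κ(A) = λ_max(A)/λ_min(A)` (via the real spectrum). -/
noncomputable def condNum {k : Type*} [Fintype k] [DecidableEq k]
    (A : Matrix k k ℝ) : ℝ :=
  sSup (spectrum ℝ A) / sInf (spectrum ℝ A)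

/-!
The matrix `1 + Uᵀ Hᵀ R⁻¹ H U` has, up to eigenvalues `1`, the characteristic polynomial of the
smaller matrix `1 + R⁻¹ (H (U Uᵀ) Hᵀ) = 1 + R⁻¹ (H B Hᵀ)`. Circulant matrices are the images of
their symbols under an algebra homomorphism, conjugation by the discrete Fourier transform, and `H`
is compatible with it: restricting to every `ζ`-th grid point averages the symbol of `B` over the
`ζ` fine-grid frequencies `i + r m` which alias to the coarse-grid frequency `i`. The symbol of
`1 + R⁻¹ (H B Hᵀ)` therefore follows pointwise from the symbol `1 + 4 (L / h)² sin² (π k / m)` of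
`1 - L² Δ_h`.
-/

section OneAddMul

variable {R k l : Type*} [CommRing R] [Fintype k] [DecidableEq k] [Fintype l] [DecidableEq l]

lemma charpoly_one_add (A : Matrix k k R) : (1 + A).charpoly = A.charpoly.comp (X - 1) := by
  have h := A.charpoly_sub_scalar (-1)
  rwa [map_neg, map_one, sub_neg_eq_add, add_comm, map_neg, map_one, ← sub_eq_add_neg] at h

lemma charpoly_one_add_mul_comm_of_le (V : Matrix k l R) (W : Matrix l k R)
    (h : Fintype.card l ≤ Fintype.card k) :
    (1 + V * W).charpoly =
      (X - 1) ^ (Fintype.card k - Fintype.card l) * (1 + W * V).charpoly := by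
  rw [charpoly_one_add, charpoly_one_add, charpoly_mul_comm_of_le V W h, mul_comp, pow_comp,
    X_comp]

end OneAddMul

lemma map_nonsing_inv {K L k : Type*} [Field K] [Field L] [Fintype k] [DecidableEq k]
    (f : K →+* L) (A : Matrix k k K) : (A⁻¹).map f = (A.map f)⁻¹ := by
  have hdet : (A.map f).det = f A.det := (f.map_det A).symm
  have hadj : (A.map f).adjugate = A.adjugate.map f := (f.map_adjugate A).symm
  rw [inv_def, inv_def, hdet, hadj, Ring.inverse_eq_inv', Ring.inverse_eq_inv', ← map_inv₀]
  exact Matrix.map_smul' f _ _ (map_mul f)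

section Character

variable {m : ℕ} [NeZero m]

lemma sum_stdAddChar_mul (a : ZMod m) :
    ∑ k : ZMod m, ZMod.stdAddChar (k * a) = if a = 0 then (m : ℂ) else 0 := by
  simpa [ZMod.card] using AddChar.sum_mulShift a (ZMod.isPrimitive_stdAddChar m)

lemma stdAddChar_mul_intCast {ζ : ℕ} [NeZero ζ] (a : ℤ) :
    ZMod.stdAddChar ((ζ * a : ℤ) : ZMod (ζ * m)) = ZMod.stdAddChar (a : ZMod m) := by
  rw [ZMod.stdAddChar_coe, ZMod.stdAddChar_coe]
  have hζ : (ζ : ℂ) ≠ 0 := NeZero.ne _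
  have hm : (m : ℂ) ≠ 0 := NeZero.ne _
  congr 1
  push_cast
  field_simp

lemma stdAddChar_add_stdAddChar_neg (k : ZMod m) :
    ZMod.stdAddChar k + ZMod.stdAddChar (-k)
      = ((2 - 4 * Real.sin (Real.pi * k.val / m) ^ 2 : ℝ) : ℂ) := by
  set t : ℝ := Real.pi * k.val / m
  have hk : (ZMod.stdAddChar k : ℂ) = Complex.exp ((2 * t : ℝ) * Complex.I) := by
    rw [← ZMod.natCast_zmod_val k, ← Int.cast_natCast, ZMod.stdAddChar_coe]
    congr 1
    push_cast [t]
    ring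
  have hcos : 2 * Real.cos (2 * t) = 2 - 4 * Real.sin t ^ 2 := by
    rw [Real.cos_two_mul, Real.cos_sq']
    ring
  rw [AddChar.map_neg_eq_inv, hk, ← Complex.exp_neg, ← neg_mul, ← Complex.two_cos, ← hcos]
  push_cast
  rfl

end Character

section FourierMultiplier

variable {m : ℕ} [NeZero m]

/-- The discrete Fourier transform on `ZMod m` as an invertible matrix: its `k`-th column is the
character `p ↦ exp (2πi k p / m)`, unnormalised, so that the factor `1 / m` is in the inverse. -/
noncomputable def fourierUnit (m : ℕ) [NeZero m] : (Matrix (ZMod m) (ZMod m) ℂ)ˣ :=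
  let F : Matrix (ZMod m) (ZMod m) ℂ := of fun p k => ZMod.stdAddChar (k * p)
  let G : Matrix (ZMod m) (ZMod m) ℂ := of fun k q => (m : ℂ)⁻¹ * ZMod.stdAddChar (-(k * q))
  have hFG : F * G = 1 := by
    ext p q
    have hterm (k : ZMod m) : F p k * G k q = (m : ℂ)⁻¹ * ZMod.stdAddChar (k * (p - q)) := by
      simp only [F, G, of_apply]
      rw [mul_left_comm, ← AddChar.map_add_eq_mul, mul_sub, sub_eq_add_neg]
    rw [mul_apply, Finset.sum_congr rfl fun k _ => hterm k, ← Finset.mul_sum, sum_stdAddChar_mul]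
    simp [sub_eq_zero, one_apply, NeZero.ne]
  ⟨F, G, hFG, mul_eq_one_comm.mp hFG⟩

/-- The Fourier multiplier with symbol `d`: the circulant matrix whose eigenvalue at the character
of frequency `k` is `d k`. -/
noncomputable def fourierMultiplier (m : ℕ) [NeZero m] :
    (ZMod m → ℂ) →ₐ[ℂ] Matrix (ZMod m) (ZMod m) ℂ :=
  (MulSemiringAction.toAlgHom ℂ _ (ConjAct.toConjAct (fourierUnit m))).comp (diagonalAlgHom ℂ)

lemma fourierMultiplier_eq_conj (d : ZMod m → ℂ) :
    fourierMultiplier m d = (fourierUnit m).val * diagonal d * (fourierUnit m)⁻¹.val :=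
  rfl

lemma fourierMultiplier_apply (d : ZMod m → ℂ) (p q : ZMod m) :
    fourierMultiplier m d p q = (m : ℂ)⁻¹ * ∑ k, d k * ZMod.stdAddChar (k * (p - q)) := by
  rw [fourierMultiplier_eq_conj, mul_apply, Finset.mul_sum]
  refine Finset.sum_congr rfl fun k _ => ?_
  rw [mul_diagonal, mul_sub, sub_eq_add_neg, AddChar.map_add_eq_mul]
  simp only [fourierUnit, Units.inv_mk, of_apply]
  ring

lemma charpoly_fourierMultiplier (d : ZMod m → ℂ) :
    (fourierMultiplier m d).charpoly = ∏ k, (X - C (d k)) := by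
  rw [fourierMultiplier_eq_conj, coe_units_inv, charpoly_units_conj, charpoly_diagonal]

lemma fourierMultiplier_inv {d : ZMod m → ℂ} (hd : ∀ k, d k ≠ 0) :
    fourierMultiplier m d⁻¹ = (fourierMultiplier m d)⁻¹ := by
  refine (inv_eq_right_inv ?_).symm
  rw [← map_mul, ← map_one (fourierMultiplier m)]
  congr 1
  ext k
  exact mul_inv_cancel₀ (hd k)

lemma fourierMultiplier_stdAddChar_mul (a p q : ZMod m) :
    fourierMultiplier m (fun k => ZMod.stdAddChar (k * a)) p q = if q = p + a then 1 else 0 := by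
  simp only [fourierMultiplier_apply, ← AddChar.map_add_eq_mul, ← mul_add, sum_stdAddChar_mul]
  have hiff : a + (p - q) = 0 ↔ q = p + a := by grind
  simp [hiff, NeZero.ne]

end FourierMultiplier

section Sampling

variable {ζ m : ℕ} [NeZero m]

lemma val_add_mul_lt (i : ZMod m) {r : ℕ} (hr : r < ζ) : i.val + r * m < ζ * m := by
  have := ZMod.val_lt i
  nlinarith

variable [NeZero ζ]

lemma sum_zmod_mul {M : Type*} [AddCommMonoid M] (f : ZMod (ζ * m) → M) :
    ∑ k, f k = ∑ i : ZMod m, ∑ r ∈ Finset.range ζ, f (i.val + r * m : ℕ) := by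
  let e : ZMod m × Fin ζ → ZMod (ζ * m) := fun x => (x.1.val + x.2 * m : ℕ)
  have hval (x : ZMod m × Fin ζ) : (e x).val = x.1.val + x.2 * m :=
    ZMod.val_natCast_of_lt (val_add_mul_lt x.1 x.2.isLt)
  have hinj : e.Injective := by
    intro x y hxy
    have h : x.1.val + x.2 * m = y.1.val + y.2 * m := by rw [← hval, hxy, hval]
    have hfst : x.1 = y.1 := by simpa using congrArg (Nat.cast : ℕ → ZMod m) h
    rw [hfst, add_right_inj] at h
    exact Prod.ext hfst (Fin.ext (Nat.eq_of_mul_eq_mul_right (NeZero.pos m) h))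
  have he : e.Bijective :=
    (Fintype.bijective_iff_injective_and_card e).2 ⟨hinj, by simp [ZMod.card, mul_comm]⟩
  rw [← he.sum_comp f, Fintype.sum_prod_type]
  refine Finset.sum_congr rfl fun i _ => ?_
  rw [Finset.sum_range]

/-- The inclusion of the coarse periodic grid of `m` points into the fine one of `ζ * m` points;
`selectionOp` restricts functions along it. -/
def gridInclusion (ζ m : ℕ) (p : ZMod m) : ZMod (ζ * m) := (ζ * p.val : ℕ)

lemma val_gridInclusion (p : ZMod m) : (gridInclusion ζ m p).val = ζ * p.val :=
  ZMod.val_natCast_of_lt (Nat.mul_lt_mul_of_pos_left (ZMod.val_lt p) (NeZero.pos ζ))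

lemma selectionOp_apply (p : ZMod m) (q : ZMod (ζ * m)) :
    selectionOp ζ m (ζ * m) p q = if q = gridInclusion ζ m p then 1 else 0 := by
  simp only [selectionOp, of_apply, ← val_gridInclusion, (ZMod.val_injective _).eq_iff]

lemma selectionOp_mul_mul_transpose (A : Matrix (ZMod (ζ * m)) (ZMod (ζ * m)) ℝ) :
    selectionOp ζ m (ζ * m) * A * (selectionOp ζ m (ζ * m))ᵀ =
      A.submatrix (gridInclusion ζ m) (gridInclusion ζ m) := by
  ext p q
  simp [mul_apply, selectionOp_apply]

-- Aliasing: the frequencies `i + r * m` with `r < ζ` are indistinguishable on the coarse grid.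
lemma stdAddChar_mul_gridInclusion_sub (i p q : ZMod m) (r : ℕ) :
    ZMod.stdAddChar (((i.val + r * m : ℕ) : ZMod (ζ * m)) *
      (gridInclusion ζ m p - gridInclusion ζ m q)) = ZMod.stdAddChar (i * (p - q)) := by
  have hcast : ((i.val + r * m : ℕ) : ZMod (ζ * m)) * (gridInclusion ζ m p - gridInclusion ζ m q)
      = ((ζ * ((i.val + r * m) * (p.val - q.val)) : ℤ) : ZMod (ζ * m)) := by
    simp only [gridInclusion]
    push_cast
    ring
  rw [hcast, stdAddChar_mul_intCast]
  simp

lemma fourierMultiplier_submatrix_gridInclusion (d : ZMod (ζ * m) → ℂ) :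
    (fourierMultiplier (ζ * m) d).submatrix (gridInclusion ζ m) (gridInclusion ζ m) =
      fourierMultiplier m fun i => (ζ : ℂ)⁻¹ * ∑ r ∈ Finset.range ζ, d (i.val + r * m : ℕ) := by
  ext p q
  rw [submatrix_apply, fourierMultiplier_apply, fourierMultiplier_apply, sum_zmod_mul]
  simp only [stdAddChar_mul_gridInclusion_sub, ← Finset.sum_mul, mul_assoc, ← Finset.mul_sum]
  rw [Nat.cast_mul, mul_inv, mul_left_comm, mul_assoc]

end Sampling

section RealSymbol

variable {m : ℕ} [NeZero m] {A A' : Matrix (ZMod m) (ZMod m) ℝ} {d d' : ZMod m → ℝ}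

/-- The real matrix `A` is the Fourier multiplier with the real symbol `d`: it is circulant and its
eigenvalue at frequency `k` is `d k`. -/
def HasFourierSymbol (A : Matrix (ZMod m) (ZMod m) ℝ) (d : ZMod m → ℝ) : Prop :=
  Complex.ofRealAm.mapMatrix A = fourierMultiplier m (Complex.ofRealAm.compLeft _ d)

namespace HasFourierSymbol

lemma one : HasFourierSymbol (1 : Matrix (ZMod m) (ZMod m) ℝ) 1 := by
  simp only [HasFourierSymbol, map_one]

lemma add (hA : HasFourierSymbol A d) (hA' : HasFourierSymbol A' d') :
    HasFourierSymbol (A + A') (d + d') := by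
  simp only [HasFourierSymbol, map_add] at *
  rw [hA, hA']

lemma sub (hA : HasFourierSymbol A d) (hA' : HasFourierSymbol A' d') :
    HasFourierSymbol (A - A') (d - d') := by
  simp only [HasFourierSymbol, map_sub] at *
  rw [hA, hA']

lemma mul (hA : HasFourierSymbol A d) (hA' : HasFourierSymbol A' d') :
    HasFourierSymbol (A * A') (d * d') := by
  simp only [HasFourierSymbol, map_mul] at *
  rw [hA, hA']

lemma smul (hA : HasFourierSymbol A d) (c : ℝ) : HasFourierSymbol (c • A) (c • d) := by
  unfold HasFourierSymbol at *
  rw [map_smul, map_smul, hA, (fourierMultiplier m).map_smul_of_tower]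

lemma pow (hA : HasFourierSymbol A d) (M : ℕ) : HasFourierSymbol (A ^ M) (d ^ M) := by
  simp only [HasFourierSymbol, map_pow] at *
  rw [hA]

lemma inv (hA : HasFourierSymbol A d) (hd : ∀ k, d k ≠ 0) : HasFourierSymbol A⁻¹ d⁻¹ := by
  have hd' (k : ZMod m) : Complex.ofRealAm.compLeft _ d k ≠ 0 := Complex.ofReal_ne_zero.2 (hd k)
  have hmap : Complex.ofRealAm.mapMatrix A⁻¹ = (Complex.ofRealAm.mapMatrix A)⁻¹ :=
    map_nonsing_inv Complex.ofRealHom A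
  rw [HasFourierSymbol, hmap, hA, ← fourierMultiplier_inv hd']
  congr 1
  ext k
  exact (Complex.ofReal_inv _).symm

lemma selectionOp_mul_mul_transpose {ζ : ℕ} [NeZero ζ]
    {A : Matrix (ZMod (ζ * m)) (ZMod (ζ * m)) ℝ} {d : ZMod (ζ * m) → ℝ}
    (hA : HasFourierSymbol A d) :
    HasFourierSymbol (selectionOp ζ m (ζ * m) * A * (selectionOp ζ m (ζ * m))ᵀ)
      fun i => (ζ : ℝ)⁻¹ * ∑ r ∈ Finset.range ζ, d (i.val + r * m : ℕ) := by
  rw [_root_.selectionOp_mul_mul_transpose, HasFourierSymbol]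
  calc (A.submatrix (gridInclusion ζ m) (gridInclusion ζ m)).map Complex.ofReal
      = (fourierMultiplier (ζ * m) (Complex.ofRealAm.compLeft _ d)).submatrix
          (gridInclusion ζ m) (gridInclusion ζ m) := by rw [← hA]; rfl
    _ = _ := by
      rw [fourierMultiplier_submatrix_gridInclusion]
      congr 1
      ext i
      simp

lemma charpoly_eq (hA : HasFourierSymbol A d) : A.charpoly = ∏ k, (X - C (d k)) := by
  apply Polynomial.map_injective Complex.ofRealHom Complex.ofRealHom.injective
  calc A.charpoly.map Complex.ofRealHom
      = (fourierMultiplier m (Complex.ofRealAm.compLeft _ d)).charpoly := by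
        rw [← charpoly_map, ← hA]; rfl
    _ = (∏ k, (X - C (d k)) : ℝ[X]).map Complex.ofRealHom := by
        simp [charpoly_fourierMultiplier, Polynomial.map_prod]

end HasFourierSymbol

end RealSymbol

section Diffusion

variable {m : ℕ}

/-- The symbol of the diffusion operator `I - L² Δ_h` on an `m`-point periodic grid. -/
noncomputable def diffusionSymbol (m : ℕ) (L h : ℝ) (k : ZMod m) : ℝ :=
  1 + 4 * (L / h) ^ 2 * Real.sin (Real.pi * k.val / m) ^ 2

lemma diffusionSymbol_pos (L h : ℝ) (k : ZMod m) : 0 < diffusionSymbol m L h k := by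
  unfold diffusionSymbol
  positivity

variable [NeZero m]

lemma hasFourierSymbol_lap (h : ℝ) :
    HasFourierSymbol (lap m h) fun k => -4 * Real.sin (Real.pi * k.val / m) ^ 2 / h ^ 2 := by
  have hsymbol : Complex.ofRealAm.compLeft (ZMod m)
        (fun k => -4 * Real.sin (Real.pi * k.val / m) ^ 2 / h ^ 2) =
      ((h : ℂ) ^ 2)⁻¹ • ((-2 : ℂ) • (1 : ZMod m → ℂ) + (fun k => ZMod.stdAddChar (k * -1)) +
        fun k => ZMod.stdAddChar (k * 1)) := by
    ext k
    have hk := stdAddChar_add_stdAddChar_neg k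
    simp only [AlgHom.compLeft_apply, Pi.smul_apply, Pi.add_apply, Pi.one_apply, smul_eq_mul,
      Function.comp_apply, mul_neg, mul_one, Complex.ofRealAm_coe]
    push_cast at hk ⊢
    linear_combination -((h : ℂ) ^ 2)⁻¹ * hk
  rw [HasFourierSymbol, hsymbol]
  simp only [map_smul, map_add, map_one]
  ext i j
  simp only [AlgHom.mapMatrix_apply, map_apply, Matrix.smul_apply, Matrix.add_apply, one_apply,
    fourierMultiplier_stdAddChar_mul, lap, of_apply, smul_eq_mul, ← sub_eq_add_neg,
    eq_sub_iff_add_eq, eq_comm (a := j + 1), Complex.ofRealAm_coe]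
  push_cast [apply_ite Complex.ofReal]
  simp only [div_eq_inv_mul, mul_ite, mul_one, mul_zero]

lemma hasFourierSymbol_one_sub_smul_lap (L h : ℝ) :
    HasFourierSymbol (1 - L ^ 2 • lap m h) (diffusionSymbol m L h) := by
  convert HasFourierSymbol.one.sub ((hasFourierSymbol_lap h).smul (L ^ 2)) using 1
  ext k
  simp only [diffusionSymbol, Pi.sub_apply, Pi.one_apply, Pi.smul_apply, smul_eq_mul]
  ring

lemma hasFourierSymbol_diffCov (σ ν L h : ℝ) (M : ℕ) :
    HasFourierSymbol (diffCov m σ ν L h M)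
      ((σ ^ 2 * ν * L / h) • (diffusionSymbol m L h ^ M)⁻¹) :=
  (((hasFourierSymbol_one_sub_smul_lap L h).pow M).inv fun k =>
    pow_ne_zero M (diffusionSymbol_pos L h k).ne').smul _

lemma hasFourierSymbol_inv_diffCov {σ ν L h : ℝ} (hscale : σ ^ 2 * ν * L / h ≠ 0) (M : ℕ) :
    HasFourierSymbol (diffCov m σ ν L h M)⁻¹
      ((σ ^ 2 * ν * L / h)⁻¹ • diffusionSymbol m L h ^ M) := by
  have hpow (k : ZMod m) : (diffusionSymbol m L h k ^ M)⁻¹ ≠ 0 :=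
    inv_ne_zero (pow_ne_zero M (diffusionSymbol_pos L h k).ne')
  convert (hasFourierSymbol_diffCov σ ν L h M).inv fun k => mul_ne_zero hscale (hpow k) using 1
  ext k
  simp only [Pi.smul_apply, Pi.inv_apply, Pi.pow_apply, smul_eq_mul, mul_inv, inv_inv]

variable {ζ : ℕ}

lemma diffusionSymbol_val_add_mul (L h : ℝ) (i : ZMod m) {r : ℕ} (hr : r < ζ) :
    diffusionSymbol (ζ * m) L h (i.val + r * m : ℕ) =
      1 + 4 * (L / h) ^ 2 * Real.sin (Real.pi * (i.val + r * m) / (ζ * m)) ^ 2 := by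
  rw [diffusionSymbol, ZMod.val_natCast_of_lt (val_add_mul_lt i hr)]
  push_cast
  rfl

lemma hasFourierSymbol_one_add_inv_diffCov_mul [NeZero ζ] (σb νb Lb : ℝ) {hb σo νo Lo ho : ℝ}
    (hhb : hb ≠ 0) (hσo : σo ≠ 0) (hνo : νo ≠ 0) (hLo : Lo ≠ 0) (hho : ho = ζ * hb) (Mb Mo : ℕ) :
    HasFourierSymbol
      (1 + (diffCov m σo νo Lo ho Mo)⁻¹ *
        (selectionOp ζ m (ζ * m) * diffCov (ζ * m) σb νb Lb hb Mb * (selectionOp ζ m (ζ * m))ᵀ))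
      fun i => 1 + (σb ^ 2 * νb * Lb / (σo ^ 2 * νo * Lo)) * ∑ r ∈ Finset.range ζ,
        diffusionSymbol m Lo ho i ^ Mo /
          diffusionSymbol (ζ * m) Lb hb (i.val + r * m : ℕ) ^ Mb := by
  have hζ : (ζ : ℝ) ≠ 0 := NeZero.ne _
  have hscale : σo ^ 2 * νo * Lo / ho ≠ 0 := by
    rw [hho]
    positivity
  convert HasFourierSymbol.one.add ((hasFourierSymbol_inv_diffCov hscale Mo).mul
    (HasFourierSymbol.selectionOp_mul_mul_transpose (ζ := ζ)
      (hasFourierSymbol_diffCov σb νb Lb hb Mb))) using 1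
  ext i
  simp only [Pi.add_apply, Pi.one_apply, Pi.mul_apply, Pi.smul_apply, Pi.pow_apply, Pi.inv_apply,
    smul_eq_mul, div_eq_mul_inv, ← Finset.mul_sum, hho]
  field_simp

end Diffusion

theorem stmt8_general (ζ m : ℕ) [NeZero ζ] [NeZero m]
    {κ : Type*} [Fintype κ] [DecidableEq κ] (hκ : m ≤ Fintype.card κ)
    (σb νb Lb hb σo νo Lo ho : ℝ) (hhb : hb ≠ 0) (hσo : σo ≠ 0) (hνo : νo ≠ 0) (hLo : Lo ≠ 0)
    (hho : ho = ζ * hb) (Mb Mo : ℕ) (U : Matrix (ZMod (ζ * m)) κ ℝ)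
    (hU : U * Uᵀ = diffCov (ζ * m) σb νb Lb hb Mb) :
    (1 + Uᵀ * (selectionOp ζ m (ζ * m))ᵀ * (diffCov m σo νo Lo ho Mo)⁻¹ *
        selectionOp ζ m (ζ * m) * U).charpoly =
      (X - 1) ^ (Fintype.card κ - m) *
        ∏ i : ZMod m, (X - C (1 + (σb ^ 2 * νb * Lb / (σo ^ 2 * νo * Lo)) *
          ∑ r ∈ Finset.range ζ,
            (1 + 4 * (Lo / ho) ^ 2 * Real.sin (Real.pi * i.val / m) ^ 2) ^ Mo /
              (1 + 4 * (Lb / hb) ^ 2 *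
                Real.sin (Real.pi * (i.val + r * m) / (ζ * m)) ^ 2) ^ Mb)) := by
  set H := selectionOp ζ m (ζ * m)
  set B := diffCov (ζ * m) σb νb Lb hb Mb
  set R := diffCov m σo νo Lo ho Mo
  have hsymbol := hasFourierSymbol_one_add_inv_diffCov_mul (m := m) σb νb Lb hhb hσo hνo hLo hho
    Mb Mo
  calc (1 + Uᵀ * Hᵀ * R⁻¹ * H * U).charpoly
      = (1 + (Uᵀ * Hᵀ) * (R⁻¹ * H * U)).charpoly := by simp only [Matrix.mul_assoc]
    _ = (X - 1 : ℝ[X]) ^ (Fintype.card κ - m) * (1 + R⁻¹ * H * U * (Uᵀ * Hᵀ)).charpoly := by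
      rw [charpoly_one_add_mul_comm_of_le _ _ (by rwa [ZMod.card]), ZMod.card]
    _ = (X - 1 : ℝ[X]) ^ (Fintype.card κ - m) * (1 + R⁻¹ * (H * B * Hᵀ)).charpoly := by
      simp only [← hU, Matrix.mul_assoc]
    _ = _ := by
      rw [hsymbol.charpoly_eq]
      congr! 7 with i - r hr
      rw [diffusionSymbol_val_add_mul Lb hb i (Finset.mem_range.1 hr), diffusionSymbol]

/-- For the diffusion-modelled circulant covariances
`B = (σ_b²ν_b L_b/h_b)(I - L_b²Δ_{h_b})^{-M_b}` (size `n`) and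
`R = (σ_o²ν_o L_o/h_o)(I - L_o²Δ_{h_o})^{-M_o}` (size `m`), with `U` the symmetric
square root of `B`, `H` the uniform selection operator, `n = ζm`, `h_o = ζ h_b`,
the matrix `S = I + Uᵀ Hᵀ R⁻¹ H U` has eigenvalues (with multiplicity, encoded via
the characteristic polynomial): `1` with multiplicity `n - m`, and
`1 + α Σ_{r<ζ} [1+4L̃_o² sin²(πi/m)]^{M_o} / [1+4L̃_b² sin²(π(i+rm)/(ζm))]^{M_b}`
for `i ∈ {0,…,m-1}`, where `α = σ_b²ν_b L_b/(σ_o²ν_o L_o)`. -/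
theorem stmt8 (ζ m n : ℕ) [NeZero m] [NeZero n] (hζ : 0 < ζ) (hn : n = ζ * m)
    (hmn : m < n)
    (σb νb Lb hb σo νo Lo ho : ℝ)
    (hσb : 0 < σb) (hνb : 0 < νb) (hLb : 0 < Lb) (hhb : 0 < hb)
    (hσo : 0 < σo) (hνo : 0 < νo) (hLo : 0 < Lo) (hho : ho = ζ * hb)
    (Mb Mo : ℕ) (hMb : 0 < Mb) (hMo : 0 < Mo)
    (B U : Matrix (ZMod n) (ZMod n) ℝ) (R : Matrix (ZMod m) (ZMod m) ℝ)
    (hB : B = diffCov n σb νb Lb hb Mb) (hR : R = diffCov m σo νo Lo ho Mo)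
    (hUsymm : U.IsSymm) (hUpd : U.PosDef) (hUU : U * U = B)
    (H : Matrix (ZMod m) (ZMod n) ℝ) (hH : H = selectionOp ζ m n)
    (S : Matrix (ZMod n) (ZMod n) ℝ)
    (hS : S = 1 + U.transpose * H.transpose * R⁻¹ * H * U) :
    S.charpoly = (Polynomial.X - 1) ^ (n - m) *
      ∏ i : ZMod m, (Polynomial.X - Polynomial.C
        (1 + (σb ^ 2 * νb * Lb / (σo ^ 2 * νo * Lo)) *
          ∑ r ∈ Finset.range ζ,
            (1 + 4 * (Lo / ho) ^ 2 * Real.sin (Real.pi * (i.val : ℝ) / m) ^ 2) ^ Mo /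
              (1 + 4 * (Lb / hb) ^ 2 *
                Real.sin (Real.pi * ((i.val : ℝ) + r * m) / (ζ * m)) ^ 2) ^ Mb)) := by
  subst hn hS hR hH
  have : NeZero ζ := ⟨hζ.ne'⟩
  have hUUt : U * Uᵀ = diffCov (ζ * m) σb νb Lb hb Mb := by rw [hUsymm.eq, hUU, hB]
  simpa only [ZMod.card] using stmt8_general ζ m (by simpa only [ZMod.card] using hmn.le) σb νb Lb
    hb σo νo Lo ho hhb.ne' hσo.ne' hνo.ne' hLo.ne' hho Mb Mo U hUUt
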